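/- Let C ⊆ E be a convex set of diameter at most D > 0, and let T : E → E map C into C and be α-gradually expansive on C with α ∈ (0, √2 - 1). Let c > 0 and β ∈ (0,1) satisfy β² = (1+c)·α·(1 + α + β²), let ε̄ > 0, let y₀ ∈ C satisfy ‖T(y₀) - y₀‖ ≤ ε̄, set λ = (β²·ε̄/D)/(1 + β²·ε̄/D), and let the sequence (y_j) be defined by y_{j+1} = λ·y₀ + (1-λ)·T(y_j). Then for every j ≥ 1, ‖T(y_j) - y_j‖ ≤ (1 - (λ/(1+c))·(c + λ))^j·ε̄ + β²·ε̄. -/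

import Mathlib

/-!
Consecutive iterates satisfy `y (j + 2) - y (j + 1) = (1 - l) • (T (y (j + 1)) - T (y j))`, and the
expansion of `T` between them is controlled by the fixed-point errors at both points. These errors
are at most `D`, so `T` is always `(1 + α)`-Lipschitz, and this crude constant already bounds every
error by `K = l * D + (1 - l) * (1 + α) * ε` as long as the increments stay below `ε`. With
`K` in place of `D`, each increment shrinks by the factor `q = (1 - l) * (1 + α * K / D)`, so if
`q ≤ 1` the increments do stay below `ε`, the induction closes, and the error at `y j` is at most
`(1 - l) * q ^ j * ε + l * D`. The prescribed step size gives `l * D = (1 - l) * β ^ 2 * ε`, and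
the equation for `β` then turns `α * K / D` into `l / (1 + c)`.
-/

section

variable {E : Type*} [SeminormedAddCommGroup E] {C : Set E} {T : E → E} {y : ℕ → E} {α D l ε : ℝ}

/-- The bound `K` on all fixed-point errors of a Halpern iteration whose initial error is at
most `ε`. -/
def halpernErrorBound (α D l ε : ℝ) : ℝ :=
  l * D + (1 - l) * ((1 + α) * ε)

/-- The factor by which the increments of a Halpern iteration shrink while the fixed-point errors
are at most `halpernErrorBound α D l ε`. -/
noncomputable def halpernRate (α D l ε : ℝ) : ℝ :=
  (1 - l) * (1 + α * halpernErrorBound α D l ε / D)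

lemma halpernErrorBound_nonneg (hα : 0 ≤ α) (hD : 0 ≤ D) (hl₀ : 0 ≤ l) (hl₁ : l ≤ 1)
    (hε : 0 ≤ ε) : 0 ≤ halpernErrorBound α D l ε := by
  have : 0 ≤ 1 - l := sub_nonneg.2 hl₁
  unfold halpernErrorBound
  positivity

lemma halpernRate_nonneg (hα : 0 ≤ α) (hD : 0 ≤ D) (hl₀ : 0 ≤ l) (hl₁ : l ≤ 1) (hε : 0 ≤ ε) :
    0 ≤ halpernRate α D l ε := by
  have : 0 ≤ 1 - l := sub_nonneg.2 hl₁
  have := halpernErrorBound_nonneg hα hD hl₀ hl₁ hε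
  unfold halpernRate
  positivity

lemma stepSize_mul_eq {b : ℝ} (hD : 0 < D) (hb : 0 ≤ b) (hl : l = b / D / (1 + b / D)) :
    l * D = (1 - l) * b := by
  have : D + b ≠ 0 := (add_pos_of_pos_of_nonneg hD hb).ne'
  rw [hl]
  field_simp
  ring

lemma halpernRate_eq_of_stepSize_mul_eq {b c : ℝ} (hD : D ≠ 0) (hc : 1 + c ≠ 0)
    (hb : b = (1 + c) * α * (1 + α + b)) (hlD : l * D = (1 - l) * (b * ε)) :
    halpernRate α D l ε = 1 - l / (1 + c) * (c + l) := by
  have hexpansion : α * halpernErrorBound α D l ε / D = l / (1 + c) := by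
    rw [div_eq_div_iff hD hc, halpernErrorBound]
    linear_combination (α * (1 + c) - 1) * hlD - (1 - l) * ε * hb
  rw [halpernRate, hexpansion]
  field_simp
  ring

/-- `T` is `α`-gradually expansive on `C` at scale `D`: it expands distances by a factor exceeding
`1` by at most `α` times the larger of the two fixed-point errors, measured in units of `D`. That
`D` bounds the diameter of `C` is not part of the definition. -/
def GraduallyExpansiveOn (α D : ℝ) (T : E → E) (C : Set E) : Prop :=
  ∀ x ∈ C, ∀ y ∈ C, ‖T x - T y‖ ≤ (1 + α * max ‖T x - x‖ ‖T y - y‖ / D) * ‖x - y‖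

namespace GraduallyExpansiveOn

lemma norm_map_sub_map_le_of_error_le (hT : GraduallyExpansiveOn α D T C) (hα : 0 ≤ α)
    (hD : 0 ≤ D) {x z : E} (hx : x ∈ C) (hz : z ∈ C) {M : ℝ} (hxM : ‖T x - x‖ ≤ M)
    (hzM : ‖T z - z‖ ≤ M) : ‖T x - T z‖ ≤ (1 + α * M / D) * ‖x - z‖ := by
  have hmax : max ‖T x - x‖ ‖T z - z‖ ≤ M := max_le hxM hzM
  refine (hT x hx z hz).trans ?_
  gcongr

lemma norm_map_sub_map_le (hT : GraduallyExpansiveOn α D T C) (hα : 0 ≤ α) (hD : 0 < D)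
    (hdiam : ∀ x ∈ C, ∀ z ∈ C, ‖x - z‖ ≤ D) (hTC : Set.MapsTo T C C) {x z : E} (hx : x ∈ C)
    (hz : z ∈ C) : ‖T x - T z‖ ≤ (1 + α) * ‖x - z‖ := by
  simpa only [mul_div_cancel_right₀ α hD.ne'] using hT.norm_map_sub_map_le_of_error_le hα hD.le
    hx hz (hdiam _ (hTC hx) _ hx) (hdiam _ (hTC hz) _ hz)

lemma one_sub_mul_norm_map_sub_map_le (hT : GraduallyExpansiveOn α D T C) (hα : 0 ≤ α)
    (hD : 0 ≤ D) (hl₁ : l ≤ 1) {x z : E} (hx : x ∈ C) (hz : z ∈ C)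
    (hxK : ‖T x - x‖ ≤ halpernErrorBound α D l ε) (hzK : ‖T z - z‖ ≤ halpernErrorBound α D l ε) :
    (1 - l) * ‖T x - T z‖ ≤ halpernRate α D l ε * ‖x - z‖ := by
  rw [halpernRate, mul_assoc]
  exact mul_le_mul_of_nonneg_left (hT.norm_map_sub_map_le_of_error_le hα hD hx hz hxK hzK)
    (sub_nonneg.2 hl₁)

end GraduallyExpansiveOn

variable [NormedSpace ℝ E]

/-- `y` is a fixed-step Halpern iteration of `T` with step size `l`, anchored at its own
starting point `y 0`. -/
def IsHalpernSeq (T : E → E) (l : ℝ) (y : ℕ → E) : Prop :=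
  ∀ j, y (j + 1) = l • y 0 + (1 - l) • T (y j)

namespace IsHalpernSeq

lemma mem (hy : IsHalpernSeq T l y) (hC : Convex ℝ C) (hTC : Set.MapsTo T C C) (hl₀ : 0 ≤ l)
    (hl₁ : l ≤ 1) (hy₀ : y 0 ∈ C) (j : ℕ) : y j ∈ C := by
  induction j with
  | zero => exact hy₀
  | succ j ih =>
    rw [hy j]
    exact hC hy₀ (hTC ih) hl₀ (sub_nonneg.2 hl₁) (add_sub_cancel l 1)

lemma norm_one_sub_zero (hy : IsHalpernSeq T l y) (hl₁ : l ≤ 1) :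
    ‖y 1 - y 0‖ = (1 - l) * ‖T (y 0) - y 0‖ := by
  have hsub : y 1 - y 0 = (1 - l) • (T (y 0) - y 0) := by
    rw [hy 0]
    module
  rw [hsub, norm_smul_of_nonneg (sub_nonneg.2 hl₁)]

lemma norm_succ_sub_succ (hy : IsHalpernSeq T l y) (hl₁ : l ≤ 1) (j : ℕ) :
    ‖y (j + 2) - y (j + 1)‖ = (1 - l) * ‖T (y (j + 1)) - T (y j)‖ := by
  rw [hy (j + 1), hy j, add_sub_add_left_eq_sub, ← smul_sub,
    norm_smul_of_nonneg (sub_nonneg.2 hl₁)]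

lemma norm_map_sub_self_succ_le (hy : IsHalpernSeq T l y) (hl₀ : 0 ≤ l) (hl₁ : l ≤ 1) (j : ℕ) :
    ‖T (y (j + 1)) - y (j + 1)‖ ≤
      l * ‖T (y (j + 1)) - y 0‖ + (1 - l) * ‖T (y (j + 1)) - T (y j)‖ := by
  have hsplit : T (y (j + 1)) - y (j + 1) =
      l • (T (y (j + 1)) - y 0) + (1 - l) • (T (y (j + 1)) - T (y j)) := by
    generalize T (y (j + 1)) = z
    rw [hy j]
    module
  calc ‖T (y (j + 1)) - y (j + 1)‖
      ≤ ‖l • (T (y (j + 1)) - y 0)‖ + ‖(1 - l) • (T (y (j + 1)) - T (y j))‖ :=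
        hsplit ▸ norm_add_le _ _
    _ = _ := by rw [norm_smul_of_nonneg hl₀, norm_smul_of_nonneg (sub_nonneg.2 hl₁)]

lemma norm_map_sub_self_succ_le_errorBound (hy : IsHalpernSeq T l y)
    (hT : GraduallyExpansiveOn α D T C) (hα : 0 ≤ α) (hD : 0 < D)
    (hdiam : ∀ x ∈ C, ∀ z ∈ C, ‖x - z‖ ≤ D) (hTC : Set.MapsTo T C C) (hl₀ : 0 ≤ l) (hl₁ : l ≤ 1)
    (hyC : ∀ j, y j ∈ C) {j : ℕ} (hstep : ‖y (j + 1) - y j‖ ≤ ε) :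
    ‖T (y (j + 1)) - y (j + 1)‖ ≤ halpernErrorBound α D l ε := by
  have : 0 ≤ 1 - l := sub_nonneg.2 hl₁
  have hanchor : ‖T (y (j + 1)) - y 0‖ ≤ D := hdiam _ (hTC (hyC _)) _ (hyC 0)
  have hlip : ‖T (y (j + 1)) - T (y j)‖ ≤ (1 + α) * ε :=
    (hT.norm_map_sub_map_le hα hD hdiam hTC (hyC _) (hyC _)).trans (by gcongr)
  refine (hy.norm_map_sub_self_succ_le hl₀ hl₁ j).trans ?_
  unfold halpernErrorBound
  gcongr

lemma error_le_and_increment_le (hy : IsHalpernSeq T l y) (hT : GraduallyExpansiveOn α D T C)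
    (hα : 0 ≤ α) (hD : 0 < D) (hdiam : ∀ x ∈ C, ∀ z ∈ C, ‖x - z‖ ≤ D) (hTC : Set.MapsTo T C C)
    (hl₀ : 0 ≤ l) (hl₁ : l ≤ 1) (hyC : ∀ j, y j ∈ C) (hy₀ : ‖T (y 0) - y 0‖ ≤ ε)
    (hrate : halpernRate α D l ε ≤ 1) (j : ℕ) :
    ‖T (y j) - y j‖ ≤ halpernErrorBound α D l ε ∧
      ‖y (j + 1) - y j‖ ≤ (1 - l) * halpernRate α D l ε ^ j * ε := by
  have h1l : 0 ≤ 1 - l := sub_nonneg.2 hl₁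
  have hε : 0 ≤ ε := (norm_nonneg _).trans hy₀
  have hq : 0 ≤ halpernRate α D l ε := halpernRate_nonneg hα hD.le hl₀ hl₁ hε
  induction j with
  | zero =>
    refine ⟨convex_Ici (𝕜 := ℝ) ‖T (y 0) - y 0‖ (hdiam _ (hTC (hyC 0)) _ (hyC 0))
      (hy₀.trans (le_mul_of_one_le_left hε (le_add_of_nonneg_right hα))) hl₀ h1l
      (add_sub_cancel l 1), ?_⟩
    rw [hy.norm_one_sub_zero hl₁, pow_zero, mul_one]
    gcongr
  | succ j ih =>
    obtain ⟨herror, hincrement⟩ := ih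
    have hincrement_le : ‖y (j + 1) - y j‖ ≤ ε := hincrement.trans <|
      mul_le_of_le_one_left hε <|
        mul_le_one₀ (sub_le_self 1 hl₀) (pow_nonneg hq j) (pow_le_one₀ hq hrate)
    have herror_succ : ‖T (y (j + 1)) - y (j + 1)‖ ≤ halpernErrorBound α D l ε :=
      hy.norm_map_sub_self_succ_le_errorBound hT hα hD hdiam hTC hl₀ hl₁ hyC hincrement_le
    refine ⟨herror_succ, ?_⟩
    calc ‖y (j + 2) - y (j + 1)‖
        = (1 - l) * ‖T (y (j + 1)) - T (y j)‖ := hy.norm_succ_sub_succ hl₁ j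
      _ ≤ halpernRate α D l ε * ‖y (j + 1) - y j‖ :=
        hT.one_sub_mul_norm_map_sub_map_le hα hD.le hl₁ (hyC _) (hyC _) herror_succ herror
      _ ≤ halpernRate α D l ε * ((1 - l) * halpernRate α D l ε ^ j * ε) := by gcongr
      _ = (1 - l) * halpernRate α D l ε ^ (j + 1) * ε := by ring

theorem norm_map_sub_self_le (hy : IsHalpernSeq T l y) (hT : GraduallyExpansiveOn α D T C)
    (hα : 0 ≤ α) (hD : 0 < D) (hC : Convex ℝ C) (hdiam : ∀ x ∈ C, ∀ z ∈ C, ‖x - z‖ ≤ D)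
    (hTC : Set.MapsTo T C C) (hl₀ : 0 ≤ l) (hl₁ : l ≤ 1) (hy₀C : y 0 ∈ C)
    (hy₀ : ‖T (y 0) - y 0‖ ≤ ε) (hrate : halpernRate α D l ε ≤ 1) (j : ℕ) :
    ‖T (y j) - y j‖ ≤ (1 - l) * halpernRate α D l ε ^ j * ε + l * D := by
  have h1l : 0 ≤ 1 - l := sub_nonneg.2 hl₁
  have hq : 0 ≤ halpernRate α D l ε :=
    halpernRate_nonneg hα hD.le hl₀ hl₁ ((norm_nonneg _).trans hy₀)
  have hyC : ∀ j, y j ∈ C := hy.mem hC hTC hl₀ hl₁ hy₀C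
  have hbounds := hy.error_le_and_increment_le hT hα hD hdiam hTC hl₀ hl₁ hyC hy₀ hrate
  cases j with
  | zero =>
    rw [pow_zero, mul_one]
    exact convex_Ici (𝕜 := ℝ) ‖T (y 0) - y 0‖ hy₀ (hdiam _ (hTC hy₀C) _ hy₀C) h1l hl₀
      (sub_add_cancel 1 l)
  | succ j =>
    calc ‖T (y (j + 1)) - y (j + 1)‖
        ≤ l * ‖T (y (j + 1)) - y 0‖ + (1 - l) * ‖T (y (j + 1)) - T (y j)‖ :=
          hy.norm_map_sub_self_succ_le hl₀ hl₁ j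
      _ ≤ l * D + halpernRate α D l ε * ‖y (j + 1) - y j‖ :=
          add_le_add (mul_le_mul_of_nonneg_left (hdiam _ (hTC (hyC _)) _ hy₀C) hl₀)
            (hT.one_sub_mul_norm_map_sub_map_le hα hD.le hl₁ (hyC _) (hyC _)
              (hbounds (j + 1)).1 (hbounds j).1)
      _ ≤ l * D + halpernRate α D l ε * ((1 - l) * halpernRate α D l ε ^ j * ε) := by
          gcongr
          exact (hbounds j).2
      _ = (1 - l) * halpernRate α D l ε ^ (j + 1) * ε + l * D := by ring

end IsHalpernSeq

theorem gradually_expansive_halpern_error_decay_general {c β : ℝ} (hC : Convex ℝ C) (hD : 0 < D)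
    (hdiam : ∀ x ∈ C, ∀ z ∈ C, ‖x - z‖ ≤ D) (hTC : Set.MapsTo T C C) (hα : 0 ≤ α)
    (hT : GraduallyExpansiveOn α D T C) (hc : 0 ≤ c)
    (hβ : β ^ 2 = (1 + c) * α * (1 + α + β ^ 2)) (hy₀C : y 0 ∈ C) (hy₀ : ‖T (y 0) - y 0‖ ≤ ε)
    (hl : l = β ^ 2 * ε / D / (1 + β ^ 2 * ε / D)) (hy : IsHalpernSeq T l y) (j : ℕ) :
    ‖T (y j) - y j‖ ≤ (1 - l / (1 + c) * (c + l)) ^ j * ε + β ^ 2 * ε := by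
  have hε : 0 ≤ ε := (norm_nonneg _).trans hy₀
  have hl₀ : 0 ≤ l := by
    rw [hl]
    positivity
  have hl₁ : l ≤ 1 := hl ▸ div_le_one_of_le₀ (le_add_of_nonneg_left zero_le_one) (by positivity)
  have hlD : l * D = (1 - l) * (β ^ 2 * ε) := stepSize_mul_eq hD (by positivity) hl
  have hrate : halpernRate α D l ε = 1 - l / (1 + c) * (c + l) :=
    halpernRate_eq_of_stepSize_mul_eq hD.ne' (by positivity) hβ hlD
  have hq : 0 ≤ halpernRate α D l ε := halpernRate_nonneg hα hD.le hl₀ hl₁ hε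
  have hq₁ : halpernRate α D l ε ≤ 1 := hrate ▸ sub_le_self 1 (by positivity)
  calc ‖T (y j) - y j‖
      ≤ (1 - l) * halpernRate α D l ε ^ j * ε + l * D :=
        hy.norm_map_sub_self_le hT hα hD hC hdiam hTC hl₀ hl₁ hy₀C hy₀ hq₁ j
    _ = (1 - l) * (halpernRate α D l ε ^ j * ε + β ^ 2 * ε) := by rw [hlD]; ring
    _ ≤ halpernRate α D l ε ^ j * ε + β ^ 2 * ε :=
        mul_le_of_le_one_left (by positivity) (sub_le_self 1 hl₀)
    _ = (1 - l / (1 + c) * (c + l)) ^ j * ε + β ^ 2 * ε := by rw [hrate]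

end

/-- For an α-gradually expansive operator (α ∈ (0, √2 - 1)) on a convex set of
diameter at most `D`, with β² = (1+c)α(1 + α + β²) and step size
`λ = (β²ε̄/D)/(1 + β²ε̄/D)`, the fixed-step Halpern iteration started at a point
with fixed-point error at most ε̄ satisfies, for all j ≥ 1,
`‖T y_j - y_j‖ ≤ (1 - (λ/(1+c))(c + λ))^j ε̄ + β² ε̄`. -/
theorem gradually_expansive_halpern_error_decay
    {E : Type*} [NormedAddCommGroup E] [NormedSpace ℝ E]
    (C : Set E) (hC : Convex ℝ C)
    (D : ℝ) (hD0 : 0 < D) (hdiam : ∀ x ∈ C, ∀ y ∈ C, ‖x - y‖ ≤ D)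
    (T : E → E) (hTC : ∀ x ∈ C, T x ∈ C)
    (α : ℝ) (hα0 : 0 < α) (hα1 : α < Real.sqrt 2 - 1)
    (hT : ∀ x ∈ C, ∀ y ∈ C,
      ‖T x - T y‖ ≤ (1 + α * max ‖T x - x‖ ‖T y - y‖ / D) * ‖x - y‖)
    (c : ℝ) (hc : 0 < c) (β : ℝ) (hβ0 : 0 < β) (hβ1 : β < 1)
    (hβ : β ^ 2 = (1 + c) * α * (1 + α + β ^ 2))
    (ε : ℝ) (hε : 0 < ε)
    (y₀ : E) (hy₀C : y₀ ∈ C) (hy₀ : ‖T y₀ - y₀‖ ≤ ε)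
    (l : ℝ) (hl : l = (β ^ 2 * ε / D) / (1 + β ^ 2 * ε / D))
    (y : ℕ → E) (hy0 : y 0 = y₀)
    (hy : ∀ j : ℕ, y (j + 1) = l • y₀ + (1 - l) • T (y j)) :
    ∀ j : ℕ, 1 ≤ j →
      ‖T (y j) - y j‖ ≤
        (1 - (l / (1 + c)) * (c + l)) ^ j * ε + β ^ 2 * ε := by
  subst hy0
  exact fun j _ ↦ gradually_expansive_halpern_error_decay_general hC hD0 hdiam hTC hα0.le hT hc.le
    hβ hy₀C hy₀ hl hy j
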